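/- Let M be the 4×3 real matrix with rows (1, 0, 0), (2/3, 1, 1), (−2/3, 1, 0), (1/3, 0, 1). Then Mᵀ M equals the matrix [[2,0,1],[0,2,1],[1,1,2]] (the Gram matrix of the face-centered cubic lattice), and for every 3-element subset S of {1,2,3,4}: det(M_Sᵀ M_S) = 1, and for every nonzero u ∈ ℤ³, ‖M_S u‖² ≥ 1, with equality attained for some nonzero u ∈ ℤ³; here M_S is the 3×3 matrix of rows of M indexed by S. -/

import Mathlib

open Matrix

/-- The `k × k` submatrix of `M` formed by the rows indexed by the `k`-element subset `S`. -/
def rowsSub {n k : ℕ} (M : Matrix (Fin n) (Fin k) ℝ)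
    (S : {s : Finset (Fin n) // s.card = k}) : Matrix (Fin k) (Fin k) ℝ :=
  fun i j => M ((S.1.orderIsoOfFin S.2 i : Fin n)) j

/-- Squared Euclidean norm of a vector in `ℝ^k`. -/
def sqnorm {k : ℕ} (x : Fin k → ℝ) : ℝ := ∑ i, x i ^ 2

/-! A lattice basis whose Gram–Schmidt vectors all have length one spans a lattice of Gram
determinant one and minimum one: writing the basis as an orthogonal matrix times an upper
unitriangular `R`, the last nonzero entry of an integer vector `w` survives unchanged in `R w`, so
`‖R w‖² ≥ 1`, while the first basis vector has length one. Each of the four children of the FCC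
lattice has such a basis. The three that keep the row `(1, 0, 0)` need one shear with fractional
entries; the one that omits it has an integral Gram matrix and is isometric to `ℤ³`. -/

lemma exists_eq_compl_singleton {α : Type*} [Fintype α] [DecidableEq α] {s : Finset α}
    (hs : s.card + 1 = Fintype.card α) : ∃ a, s = {a}ᶜ := by
  have hcompl : sᶜ.card = 1 := by rw [Finset.card_compl]; omega
  obtain ⟨a, ha⟩ := Finset.card_eq_one.mp hcompl
  exact ⟨a, by rw [← ha, compl_compl]⟩

lemma exists_rowsSub_eq_submatrix_succAbove {n : ℕ} (M : Matrix (Fin (n + 1)) (Fin n) ℝ)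
    (S : {s : Finset (Fin (n + 1)) // s.card = n}) :
    ∃ i : Fin (n + 1), rowsSub M S = M.submatrix i.succAbove id := by
  obtain ⟨s, hs⟩ := S
  obtain ⟨i, rfl⟩ := exists_eq_compl_singleton (s := s) (by rw [hs, Fintype.card_fin])
  refine ⟨i, ?_⟩
  ext j l
  simp only [rowsSub, Finset.coe_orderIsoOfFin_apply, Finset.orderEmbOfFin_compl_singleton_apply,
    Fin.cast_eq_self, submatrix_apply, id_eq]

lemma sqnorm_eq_dotProduct {k : ℕ} (x : Fin k → ℝ) : sqnorm x = x ⬝ᵥ x := by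
  simp only [sqnorm, dotProduct, sq]

lemma sqnorm_single_one {k : ℕ} (i : Fin k) : sqnorm (Pi.single i 1) = 1 := by
  rw [sqnorm_eq_dotProduct, single_one_dotProduct, Pi.single_eq_same]

lemma sq_apply_le_sqnorm {k : ℕ} (x : Fin k → ℝ) (i : Fin k) : x i ^ 2 ≤ sqnorm x :=
  Finset.single_le_sum (f := fun j => x j ^ 2) (fun _ _ => sq_nonneg _) (Finset.mem_univ i)

lemma sqnorm_mulVec_congr {k l n : ℕ} {A : Matrix (Fin k) (Fin n) ℝ}
    {B : Matrix (Fin l) (Fin n) ℝ} (h : Aᵀ * A = Bᵀ * B) (x : Fin n → ℝ) :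
    sqnorm (A *ᵥ x) = sqnorm (B *ᵥ x) := by
  simp only [sqnorm_eq_dotProduct, dotProduct_mulVec, vecMul_mulVec, h]

lemma exists_last_ne_zero {ι α : Type*} [Finite ι] [LinearOrder ι] [Zero α] {v : ι → α}
    (hv : v ≠ 0) : ∃ i, v i ≠ 0 ∧ ∀ j, i < j → v j = 0 := by
  obtain ⟨i, hi⟩ := (Set.toFinite (Function.support v)).exists_maximal
    (Function.support_nonempty_iff.mpr hv)
  exact ⟨i, hi.prop, fun j hij => by_contra fun hj => hi.not_prop_of_gt hij hj⟩

lemma mulVec_apply_of_isUpperTriangular {ι α : Type*} [Fintype ι] [LinearOrder ι]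
    [NonUnitalNonAssocSemiring α] {R : Matrix ι ι α} (hR : R.IsUpperTriangular) {v : ι → α}
    {i : ι} (hv : ∀ j, i < j → v j = 0) : (R *ᵥ v) i = R i i * v i := by
  rw [mulVec, dotProduct]
  refine Finset.sum_eq_single i (fun j _ hji => ?_) (by simp)
  rcases hji.lt_or_gt with hji | hij
  · rw [hR hji, zero_mul]
  · rw [hv j hij, mul_zero]

lemma one_le_sqnorm_mulVec_of_isUpperTriangular {n : ℕ} {R : Matrix (Fin n) (Fin n) ℝ}
    (hR : R.IsUpperTriangular) (hdiag : ∀ i, R i i = 1) {w : Fin n → ℤ} (hw : w ≠ 0) :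
    1 ≤ sqnorm (R *ᵥ fun j => (w j : ℝ)) := by
  obtain ⟨i, hi, hlast⟩ := exists_last_ne_zero hw
  have hRw : (R *ᵥ fun j => (w j : ℝ)) i = w i := by
    rw [mulVec_apply_of_isUpperTriangular hR fun j hij => by rw [hlast j hij, Int.cast_zero],
      hdiag, one_mul]
  calc
    (1 : ℝ) ≤ (w i : ℝ) ^ 2 := by
      exact_mod_cast (one_le_sq_iff_one_le_abs _).mpr (Int.one_le_abs hi)
    _ = (R *ᵥ fun j => (w j : ℝ)) i ^ 2 := by rw [hRw]
    _ ≤ sqnorm (R *ᵥ fun j => (w j : ℝ)) := sq_apply_le_sqnorm _ i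

lemma mulVec_single_zero_one_of_isUpperTriangular {n : ℕ} [NeZero n] {α : Type*}
    [NonAssocSemiring α] {R : Matrix (Fin n) (Fin n) α} (hR : R.IsUpperTriangular)
    (hdiag : ∀ i, R i i = 1) : R *ᵥ Pi.single 0 1 = Pi.single 0 1 := by
  rw [mulVec_single_one]
  ext i
  rcases eq_or_ne i 0 with rfl | hi
  · rw [col_apply, hdiag, Pi.single_eq_same]
  · rw [col_apply, hR (Fin.pos_iff_ne_zero.mpr hi), Pi.single_eq_of_ne hi]

lemma mul_map_intCast_mulVec {l m n α : Type*} [Fintype m] [Fintype n] [Ring α] (R : Matrix l m α)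
    (U : Matrix m n ℤ) (u : n → ℤ) :
    (R * U.map (Int.cast : ℤ → α)) *ᵥ (fun j => (u j : α)) = R *ᵥ fun j => ((U *ᵥ u) j : α) := by
  rw [← mulVec_mulVec]
  congr 1
  ext j
  exact ((Int.castRingHom α).map_mulVec U u j).symm

/-- The lattice spanned by the columns of `A` has a basis whose Gram–Schmidt vectors all have length
one, so that its determinant and minimum can be read off. The basis is `A U⁻¹` for the unimodular
`U`, and `R` is its Gram–Schmidt (QR) factor; as lengths and determinants depend only on the Gram
matrix, the orthogonal factor is left out. -/
def HasUnitGramSchmidtBasis {m n : ℕ} (A : Matrix (Fin m) (Fin n) ℝ) : Prop :=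
  ∃ (R : Matrix (Fin n) (Fin n) ℝ) (U : Matrix (Fin n) (Fin n) ℤ),
    R.IsUpperTriangular ∧ (∀ i, R i i = 1) ∧ IsUnit U.det ∧
      Aᵀ * A = (R * U.map (Int.cast : ℤ → ℝ))ᵀ * (R * U.map (Int.cast : ℤ → ℝ))

namespace HasUnitGramSchmidtBasis

variable {m n : ℕ} {A : Matrix (Fin m) (Fin n) ℝ}

lemma det_transpose_mul_self (hA : HasUnitGramSchmidtBasis A) : (Aᵀ * A).det = 1 := by
  obtain ⟨R, U, hR, hdiag, hU, hgram⟩ := hA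
  have hRdet : R.det = 1 := by
    rw [det_of_isUpperTriangular hR, Finset.prod_eq_one fun i _ => hdiag i]
  have hUdet : (U.map (Int.cast : ℤ → ℝ)).det = U.det := ((Int.castRingHom ℝ).map_det U).symm
  rw [hgram, det_mul, det_transpose, det_mul, hRdet, hUdet, one_mul]
  exact_mod_cast Int.isUnit_mul_self hU

lemma one_le_sqnorm_mulVec (hA : HasUnitGramSchmidtBasis A) {u : Fin n → ℤ} (hu : u ≠ 0) :
    1 ≤ sqnorm (A *ᵥ fun j => (u j : ℝ)) := by
  obtain ⟨R, U, hR, hdiag, hU, hgram⟩ := hA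
  have hUu : U *ᵥ u ≠ 0 := fun h => hu (eq_zero_of_mulVec_eq_zero hU.ne_zero h)
  rw [sqnorm_mulVec_congr hgram, mul_map_intCast_mulVec]
  exact one_le_sqnorm_mulVec_of_isUpperTriangular hR hdiag hUu

lemma exists_sqnorm_mulVec_eq_one [NeZero n] (hA : HasUnitGramSchmidtBasis A) :
    ∃ u : Fin n → ℤ, u ≠ 0 ∧ sqnorm (A *ᵥ fun j => (u j : ℝ)) = 1 := by
  obtain ⟨R, U, hR, hdiag, hU, hgram⟩ := hA
  have hUu : U *ᵥ (U⁻¹ *ᵥ Pi.single 0 1) = Pi.single 0 1 := by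
    rw [mulVec_mulVec, mul_nonsing_inv U hU, one_mulVec]
  have hcast : (fun j => ((Pi.single 0 1 : Fin n → ℤ) j : ℝ)) = Pi.single 0 1 := by
    ext j
    simp [Pi.single_apply]
  refine ⟨U⁻¹ *ᵥ Pi.single 0 1, fun h => ?_, ?_⟩
  · rw [h, mulVec_zero] at hUu
    exact one_ne_zero (Pi.single_eq_zero_iff.mp hUu.symm)
  · rw [sqnorm_mulVec_congr hgram, mul_map_intCast_mulVec, hUu, hcast,
      mulVec_single_zero_one_of_isUpperTriangular hR hdiag, sqnorm_single_one]

lemma of_gram_eq_unimodular_gram {U : Matrix (Fin n) (Fin n) ℤ} (hU : IsUnit U.det)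
    (hgram : Aᵀ * A = (Uᵀ * U).map (Int.cast : ℤ → ℝ)) : HasUnitGramSchmidtBasis A := by
  refine ⟨1, U, blockTriangular_one, one_apply_eq, hU, ?_⟩
  rw [hgram, one_mul, ← transpose_map]
  exact Matrix.map_mul (f := Int.castRingHom ℝ)

lemma of_shear (p q : ℝ) (a b c d : ℤ) (hdet : IsUnit (!![a, b; c, d].det)) :
    HasUnitGramSchmidtBasis !![1, 0, 0; p, (a : ℝ), (b : ℝ); q, (c : ℝ), (d : ℝ)] := by
  refine ⟨!![1, 0, p; 0, 1, q; 0, 0, 1], !![0, a, b; 0, c, d; 1, 0, 0], fun i j hij => ?_,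
    fun i => ?_, ?_, ?_⟩
  · fin_cases i <;> fin_cases j <;> first | rfl | exact absurd hij (by decide)
  · fin_cases i <;> rfl
  · simpa [det_fin_three, det_fin_two] using hdet
  · -- `R * U` is the given matrix with its first row moved to the end.
    ext i j
    fin_cases i <;> fin_cases j <;>
      simp [mul_apply, Fin.sum_univ_three, vecMul, dotProduct, add_assoc, add_comm, add_left_comm]

end HasUnitGramSchmidtBasis

/-- The paper's generator matrix `M` of the `(4,3)` code. -/
noncomputable def fccGenerator : Matrix (Fin 4) (Fin 3) ℝ :=
  !![1, 0, 0; 2/3, 1, 1; -2/3, 1, 0; 1/3, 0, 1]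

lemma fccGenerator_transpose_mul_self :
    fccGeneratorᵀ * fccGenerator = !![2, 0, 1; 0, 2, 1; 1, 1, 2] := by
  ext i j
  fin_cases i <;> fin_cases j <;> simp [fccGenerator, mul_apply, Fin.sum_univ_four] <;> norm_num

lemma hasUnitGramSchmidtBasis_fccGenerator_submatrix_succAbove (i : Fin 4) :
    HasUnitGramSchmidtBasis (fccGenerator.submatrix i.succAbove id) := by
  fin_cases i
  · refine .of_gram_eq_unimodular_gram (U := !![1, 0, 1; 0, 1, 1; 0, 1, 0]) (by decide) ?_
    ext j l
    fin_cases j <;> fin_cases l <;>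
      simp [fccGenerator, mul_apply, Fin.sum_univ_three] <;> norm_num
  · convert HasUnitGramSchmidtBasis.of_shear (-2/3) (1/3) 1 0 0 1 (by decide)
    ext j l
    fin_cases j <;> fin_cases l <;> simp [fccGenerator, Fin.succAbove]
  · convert HasUnitGramSchmidtBasis.of_shear (2/3) (1/3) 1 1 0 1 (by decide)
    ext j l
    fin_cases j <;> fin_cases l <;> simp [fccGenerator, Fin.succAbove]
  · convert HasUnitGramSchmidtBasis.of_shear (2/3) (-2/3) 1 1 1 0 (by decide)
    ext j l
    fin_cases j <;> fin_cases l <;> simp [fccGenerator, Fin.succAbove]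

/-- The paper's `(4,3)` construction with the face-centered cubic mother lattice:
`Mᵀ M` is the FCC Gram matrix, and every child lattice `M_S ℤ³` has unit Gram
determinant and shortest nonzero vector of squared length exactly `1`. -/
theorem four_three_fcc_construction :
    letI M : Matrix (Fin 4) (Fin 3) ℝ :=
      !![1, 0, 0; 2/3, 1, 1; -2/3, 1, 0; 1/3, 0, 1]
    Mᵀ * M = !![2, 0, 1; 0, 2, 1; 1, 1, 2] ∧
    ∀ S : {s : Finset (Fin 4) // s.card = 3},
      ((rowsSub M S)ᵀ * rowsSub M S).det = 1 ∧
      (∀ u : Fin 3 → ℤ, u ≠ 0 →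
        1 ≤ sqnorm ((rowsSub M S).mulVec fun j => (u j : ℝ))) ∧
      (∃ u : Fin 3 → ℤ, u ≠ 0 ∧
        sqnorm ((rowsSub M S).mulVec fun j => (u j : ℝ)) = 1) := by
  refine ⟨fccGenerator_transpose_mul_self, fun S => ?_⟩
  obtain ⟨i, hi⟩ := exists_rowsSub_eq_submatrix_succAbove fccGenerator S
  have hchild : HasUnitGramSchmidtBasis (rowsSub fccGenerator S) :=
    hi ▸ hasUnitGramSchmidtBasis_fccGenerator_submatrix_succAbove i
  exact ⟨hchild.det_transpose_mul_self, fun _ hu => hchild.one_le_sqnorm_mulVec hu,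
    hchild.exists_sqnorm_mulVec_eq_one⟩
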